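/- Let s and e be composable labelled transition systems with s eco e, let σ ∈ Utraces(s ∥ e), and let q_s ∈ Q_s, q_e ∈ Q_e. Then s ∥ e ==σ==> q_s ∥ q_e if and only if s ==σ↾L_s^δ==> q_s and e ==σ↾L_e^δ==> q_e. -/

import Mathlib

/-- Labels extended with the quiescence label `δ`. -/
inductive ELabel (Lab : Type) : Type
  | lab : Lab → ELabel Lab
  | delta : ELabel Lab

namespace ELabel

/-- Membership of an extended label in `𝓛^δ = 𝓛 ∪ {δ}`. -/
def inL {Lab : Type} (Ls : Set Lab) : ELabel Lab → Prop
  | lab ℓ => ℓ ∈ Ls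
  | delta => True

end ELabel

/-- A trace lies in `(𝓛^δ)*`. -/
def TraceIn {Lab : Type} (Ls : Set Lab) (σ : List (ELabel Lab)) : Prop :=
  ∀ x ∈ σ, ELabel.inL Ls x

/-- A labelled transition system.  `T q none q'` is an internal `τ`-step,
`T q (some ℓ) q'` is a step labelled `ℓ`. -/
structure LTS (Q : Type) (Lab : Type) where
  I : Set Lab
  U : Set Lab
  T : Q → Option Lab → Q → Prop
  q0 : Q

namespace LTS

variable {Q Lab : Type}

/-- The label set `L = I ∪ U`. -/
def L (M : LTS Q Lab) : Set Lab := M.I ∪ M.U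

/-- Standing assumptions on all LTSs: countable, disjoint input/output label
sets, transitions labelled within `L`, strong convergence (no infinite
`τ`-sequences), and image-finiteness. -/
def WellFormed (M : LTS Q Lab) : Prop :=
  M.I.Countable ∧ M.U.Countable ∧ Disjoint M.I M.U ∧
  (∀ q ℓ q', M.T q (some ℓ) q' → ℓ ∈ M.L) ∧
  (¬ ∃ f : ℕ → Q, ∀ n, M.T (f n) none (f (n + 1))) ∧
  (∀ q a, {q' | M.T q a q'}.Finite)

/-- A state is quiescent if neither an output nor `τ` is enabled in it. -/
def Quiescent (M : LTS Q Lab) (q : Q) : Prop :=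
  (∀ x ∈ M.U, ∀ q', ¬ M.T q (some x) q') ∧ ∀ q', ¬ M.T q none q'

/-- A single visible step `q --x--> q'` for `x ∈ L^δ`, where the quiescence
label `δ` gives a self-loop at quiescent states. -/
def VStep (M : LTS Q Lab) (q : Q) : ELabel Lab → Q → Prop
  | .lab ℓ, q' => M.T q (some ℓ) q'
  | .delta, q' => q' = q ∧ M.Quiescent q

/-- Zero or more `τ`-steps: `q ==ε==> q'`. -/
def Eps (M : LTS Q Lab) : Q → Q → Prop :=
  Relation.ReflTransGen fun a b => M.T a none b

/-- Weak transition `q ==σ==> q'` for `σ ∈ (L^δ)*`. -/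
inductive W (M : LTS Q Lab) : Q → List (ELabel Lab) → Q → Prop
  | nil {q q' : Q} : M.Eps q q' → W M q [] q'
  | snoc {q q1 q2 q' : Q} {σ : List (ELabel Lab)} {x : ELabel Lab} :
      W M q σ q1 → M.VStep q1 x q2 → M.Eps q2 q' → W M q (σ ++ [x]) q'

/-- `X after σ`, for a set of states `X`. -/
def afterSet (M : LTS Q Lab) (X : Set Q) (σ : List (ELabel Lab)) : Set Q :=
  {q' | ∃ q ∈ X, M.W q σ q'}

/-- `M after σ`, from the initial state. -/
def after (M : LTS Q Lab) (σ : List (ELabel Lab)) : Set Q :=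
  {q' | M.W M.q0 σ q'}

/-- The predicate underlying `out(q) ⊆ U ∪ {δ}`. -/
def outLabel (M : LTS Q Lab) (q : Q) : ELabel Lab → Prop
  | .lab ℓ => ℓ ∈ M.U ∧ ∃ q', M.T q (some ℓ) q'
  | .delta => M.Quiescent q

/-- `out(q)`. -/
def outq (M : LTS Q Lab) (q : Q) : Set (ELabel Lab) :=
  {x | M.outLabel q x}

/-- `in(q) = {ℓ ∈ I | q ==ℓ==>}`. -/
def inq (M : LTS Q Lab) (q : Q) : Set Lab :=
  {ℓ | ℓ ∈ M.I ∧ ∃ q', M.W q [ELabel.lab ℓ] q'}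

/-- `out(X) = ⋃_{q ∈ X} out(q)`. -/
def outSet (M : LTS Q Lab) (X : Set Q) : Set (ELabel Lab) :=
  ⋃ q ∈ X, M.outq q

/-- `in(X) = ⋂_{q ∈ X} in(q)`. -/
def inSet (M : LTS Q Lab) (X : Set Q) : Set Lab :=
  ⋂ q ∈ X, M.inq q

/-- Input-enabledness: `M` is an IOTS. -/
def InputEnabled (M : LTS Q Lab) : Prop :=
  ∀ q, ∀ ℓ ∈ M.I, ∃ q', M.W q [ELabel.lab ℓ] q'

/-- `Utraces(M)`. -/
def Utraces (M : LTS Q Lab) : Set (List (ELabel Lab)) :=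
  {σ | TraceIn M.L σ ∧ (∃ q', M.W M.q0 σ q') ∧
    ∀ σ1 ℓ σ2, σ = σ1 ++ ELabel.lab ℓ :: σ2 → ℓ ∈ M.I →
      ∀ q, M.W M.q0 σ1 q → ∃ q', M.W q [ELabel.lab ℓ] q'}

/-- An LTS is utrace-closed when every trace over `(L^δ)*` that it can
perform is a utrace. -/
def UtraceClosed (M : LTS Q Lab) : Prop :=
  ∀ σ : List (ELabel Lab), TraceIn M.L σ → (∃ q', M.W M.q0 σ q') → σ ∈ M.Utraces

end LTS

/-- `i uioco s`. -/
def Uioco {Qi Qs Lab : Type} (i : LTS Qi Lab) (s : LTS Qs Lab) : Prop :=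
  ∀ σ ∈ s.Utraces, i.outSet (i.after σ) ⊆ s.outSet (s.after σ)

/-- Composability: disjoint output label sets. -/
def Composable {Qs Qe Lab : Type} (s : LTS Qs Lab) (e : LTS Qe Lab) : Prop :=
  s.U ∩ e.U = ∅

/-- Parallel composition `s ∥ e`. -/
def par {Qs Qe Lab : Type} (s : LTS Qs Lab) (e : LTS Qe Lab) : LTS (Qs × Qe) Lab where
  I := (s.I \ e.U) ∪ (e.I \ s.U)
  U := s.U ∪ e.U
  T := fun p a p' =>
    match a with
    | none =>
        (s.T p.1 none p'.1 ∧ p'.2 = p.2) ∨ (e.T p.2 none p'.2 ∧ p'.1 = p.1)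
    | some ℓ =>
        (ℓ ∈ s.L ∧ ℓ ∉ e.L ∧ s.T p.1 (some ℓ) p'.1 ∧ p'.2 = p.2) ∨
        (ℓ ∈ e.L ∧ ℓ ∉ s.L ∧ e.T p.2 (some ℓ) p'.2 ∧ p'.1 = p.1) ∨
        (ℓ ∈ s.L ∧ ℓ ∈ e.L ∧ s.T p.1 (some ℓ) p'.1 ∧ e.T p.2 (some ℓ) p'.2)
  q0 := (s.q0, e.q0)

/-- `s accepts e`: along utraces of `s ∥ e`, every output of `e` that is an
input of `s` is (weakly) enabled in `s`. -/
def Accepts {Qs Qe Lab : Type} (s : LTS Qs Lab) (e : LTS Qe Lab) : Prop :=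
  ∀ σ ∈ (par s e).Utraces, ∀ qs qe, (par s e).W (par s e).q0 σ (qs, qe) →
    ∀ ℓ, ELabel.lab ℓ ∈ e.outq qe → ℓ ∈ s.I → ℓ ∈ s.inq qs

/-- `s mutually accepts e`. -/
def MutuallyAccepts {Qs Qe Lab : Type} (s : LTS Qs Lab) (e : LTS Qe Lab) : Prop :=
  Accepts s e ∧ Accepts e s

/-- `R` is an ecosim for `s` and `e`. -/
def IsEcosim {Qs Qe Lab : Type} (s : LTS Qs Lab) (e : LTS Qe Lab)
    (R : Set (Set Qs × Set Qe)) : Prop :=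
  (s.after [], e.after []) ∈ R ∧
  ∀ Xs Xe, (Xs, Xe) ∈ R →
    (∀ ℓ, ELabel.lab ℓ ∈ e.outSet Xe → ℓ ∈ s.I →
      ℓ ∈ s.inSet Xs ∧
        (s.afterSet Xs [ELabel.lab ℓ], e.afterSet Xe [ELabel.lab ℓ]) ∈ R) ∧
    (∀ ℓ, ELabel.lab ℓ ∈ s.outSet Xs → ℓ ∈ e.I →
      ℓ ∈ e.inSet Xe ∧
        (s.afterSet Xs [ELabel.lab ℓ], e.afterSet Xe [ELabel.lab ℓ]) ∈ R) ∧
    (∀ ℓ, (ELabel.lab ℓ ∈ e.outSet Xe ∨ ℓ ∈ e.inSet Xe) → ℓ ∉ s.L →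
      (Xs, e.afterSet Xe [ELabel.lab ℓ]) ∈ R) ∧
    (∀ ℓ, (ELabel.lab ℓ ∈ s.outSet Xs ∨ ℓ ∈ s.inSet Xs) → ℓ ∉ e.L →
      (s.afterSet Xs [ELabel.lab ℓ], Xe) ∈ R) ∧
    (∀ ℓ, ℓ ∈ s.inSet Xs → ℓ ∈ e.inSet Xe →
      (s.afterSet Xs [ELabel.lab ℓ], e.afterSet Xe [ELabel.lab ℓ]) ∈ R) ∧
    (ELabel.delta ∈ s.outSet Xs → ELabel.delta ∈ e.outSet Xe →
      (s.afterSet Xs [ELabel.delta], e.afterSet Xe [ELabel.delta]) ∈ R)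

/-- `s eco e`: there exists an ecosim for `s` and `e`. -/
def Eco {Qs Qe Lab : Type} (s : LTS Qs Lab) (e : LTS Qe Lab) : Prop :=
  ∃ R, IsEcosim s e R

/-- `R_U(s,e)`: the smallest relation closed under the given rules. -/
inductive RU {Qs Qe Lab : Type} (s : LTS Qs Lab) (e : LTS Qe Lab) :
    Set Qs → Set Qe → Prop
  | base : RU s e (s.after []) (e.after [])
  | syncOutE {Xs : Set Qs} {Xe : Set Qe} (ℓ : Lab) :
      RU s e Xs Xe → ELabel.lab ℓ ∈ e.outSet Xe → ℓ ∈ s.I →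
      RU s e (s.afterSet Xs [ELabel.lab ℓ]) (e.afterSet Xe [ELabel.lab ℓ])
  | syncOutS {Xs : Set Qs} {Xe : Set Qe} (ℓ : Lab) :
      RU s e Xs Xe → ELabel.lab ℓ ∈ s.outSet Xs → ℓ ∈ e.I →
      RU s e (s.afterSet Xs [ELabel.lab ℓ]) (e.afterSet Xe [ELabel.lab ℓ])
  | internalE {Xs : Set Qs} {Xe : Set Qe} (ℓ : Lab) :
      RU s e Xs Xe → (ELabel.lab ℓ ∈ e.outSet Xe ∨ ℓ ∈ e.inSet Xe) → ℓ ∉ s.L →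
      RU s e Xs (e.afterSet Xe [ELabel.lab ℓ])
  | internalS {Xs : Set Qs} {Xe : Set Qe} (ℓ : Lab) :
      RU s e Xs Xe → (ELabel.lab ℓ ∈ s.outSet Xs ∨ ℓ ∈ s.inSet Xs) → ℓ ∉ e.L →
      RU s e (s.afterSet Xs [ELabel.lab ℓ]) Xe
  | syncIn {Xs : Set Qs} {Xe : Set Qe} (ℓ : Lab) :
      RU s e Xs Xe → ℓ ∈ s.inSet Xs → ℓ ∈ e.inSet Xe →
      RU s e (s.afterSet Xs [ELabel.lab ℓ]) (e.afterSet Xe [ELabel.lab ℓ])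
  | qdelta {Xs : Set Qs} {Xe : Set Qe} :
      RU s e Xs Xe → ELabel.delta ∈ s.outSet Xs → ELabel.delta ∈ e.outSet Xe →
      RU s e (s.afterSet Xs [ELabel.delta]) (e.afterSet Xe [ELabel.delta])

open Classical in
/-- Projection `σ↾𝓛^δ` of a trace onto an (extended) label set: keeps `δ`
and the labels in `Ls`, removes all other labels. -/
noncomputable def projD {Lab : Type} (σ : List (ELabel Lab)) (Ls : Set Lab) :
    List (ELabel Lab) :=
  σ.filter fun x => decide (ELabel.inL Ls x)

open Classical in
/-- Projection `σ↾𝓛` of a trace of plain labels onto a label set. -/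
noncomputable def projL {Lab : Type} (σ : List Lab) (Ls : Set Lab) : List Lab :=
  σ.filter fun ℓ => decide (ℓ ∈ Ls)

open Classical in
/-- Substitution `σ[θ/δ]` of the label `θ` by the quiescence label `δ`. -/
noncomputable def substTheta {Lab : Type} (θ : Lab) (σ : List Lab) :
    List (ELabel Lab) :=
  σ.map fun ℓ => if ℓ = θ then ELabel.delta else ELabel.lab ℓ

/-- `⟨X⟩`: componentwise collection of a set of pairs of states. -/
def collect {Qs Qe : Type} (X : Set (Qs × Qe)) : Set Qs × Set Qe :=
  (Prod.fst '' X, Prod.snd '' X)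

/-- `q_s accepts q_e over σ`. -/
def AcceptsOver {Qs Qe Lab : Type} (s : LTS Qs Lab) (e : LTS Qe Lab)
    (qs : Qs) (qe : Qe) (σ : List (ELabel Lab)) : Prop :=
  ∀ σ1 σ2 : List (ELabel Lab), σ1 ++ σ2 = σ →
    ∀ (qs' : Qs) (qe' : Qe), (par s e).W (qs, qe) σ1 (qs', qe') →
      ∀ ℓ, ELabel.lab ℓ ∈ e.outq qe' → ℓ ∈ s.I → ℓ ∈ s.inq qs' ∧ ℓ ∈ e.U

/-- `q_s mutually accepts q_e over σ`. -/
def MutuallyAcceptsOver {Qs Qe Lab : Type} (s : LTS Qs Lab) (e : LTS Qe Lab)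
    (qs : Qs) (qe : Qe) (σ : List (ELabel Lab)) : Prop :=
  AcceptsOver s e qs qe σ ∧ AcceptsOver e s qe qs σ

/-- A test case: a quasi-finite tree-shaped LTS without `τ`-transitions, with
terminal states `pass` and `fail` carrying input self-loops, a special
quiescence-observation input `θ`, at most one output transition per state,
and receptive to all inputs other than `θ`. -/
structure TestCase (Qt Lab : Type) extends LTS Qt Lab where
  passS : Qt
  failS : Qt
  theta : Lab
  theta_input : theta ∈ I
  no_tau : ∀ q q', ¬ T q none q'
  tree : ∀ q, q ≠ q0 → q ≠ passS → q ≠ failS →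
    ∃! p : Qt × Option Lab, T p.1 p.2 q
  pass_loops : ∀ ℓ ∈ I, T passS (some ℓ) passS
  pass_terminal : ∀ a q', T passS a q' → q' = passS ∧ ∃ ℓ ∈ I, a = some ℓ
  fail_loops : ∀ ℓ ∈ I, T failS (some ℓ) failS
  fail_terminal : ∀ a q', T failS a q' → q' = failS ∧ ∃ ℓ ∈ I, a = some ℓ
  one_output : ∀ q ℓ ℓ' q' q'', ℓ ∈ U → ℓ' ∈ U →
    T q (some ℓ) q' → T q (some ℓ') q'' → ℓ = ℓ' ∧ q' = q''
  receptive : ∀ q, ∀ ℓ ∈ I, ℓ ≠ theta → ∃ q', T q (some ℓ) q'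

/-- Test execution `t ⫿ i` of a test case `t` with an implementation `i`. -/
def testExec {Qt Qi Lab : Type} (t : TestCase Qt Lab) (i : LTS Qi Lab) :
    LTS (Qt × Qi) Lab where
  I := ∅
  U := i.U ∪ (t.toLTS.L \ {t.theta})
  T := fun p a p' =>
    match a with
    | none => i.T p.2 none p'.2 ∧ p'.1 = p.1
    | some ℓ =>
        (ℓ ∈ i.L ∧ ℓ ∉ t.toLTS.L ∧ i.T p.2 (some ℓ) p'.2 ∧ p'.1 = p.1) ∨
        (ℓ ∈ t.toLTS.L ∧ ℓ ∉ i.L ∧ ℓ ≠ t.theta ∧ t.T p.1 (some ℓ) p'.1 ∧ p'.2 = p.2) ∨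
        (ℓ ∈ i.L ∧ ℓ ∈ t.toLTS.L ∧ t.T p.1 (some ℓ) p'.1 ∧ i.T p.2 (some ℓ) p'.2) ∨
        (ℓ = t.theta ∧ t.T p.1 (some ℓ) p'.1 ∧ p'.2 = p.2 ∧ i.Quiescent p.2)
  q0 := (t.q0, i.q0)

/-!
Call two states *mutually accepting* when each can (weakly) receive every output of the other that
it has as an input. A step of `s ∥ e` is a pair of steps of `s` and `e`, one of which may be idle,
and the only obstacle to reading this off componentwise is quiescence: `q_s ∥ q_e` may be quiescent
because an output of one side is blocked by the other. At mutually accepting states this cannot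
happen. An ecosim provides mutual acceptance as long as the pair of sets
`(s after σ↾L_s^δ, e after σ↾L_e^δ)` stays inside it. That invariant and the identity
`(s ∥ e) after σ = (s after σ↾L_s^δ) × (e after σ↾L_e^δ)` are proved by a simultaneous induction:
the invariant yields the identity for the next trace, while the identity turns the utrace condition
on inputs of `s ∥ e` into the conditions on inputs of `s` and `e` that the ecosim clauses require.
-/

namespace LTS

section SingleSystem

variable {Q Lab : Type} {M : LTS Q Lab} {q q₁ q' : Q} {X : Set Q} {ℓ : Lab} {x : ELabel Lab}
  {σ : List (ELabel Lab)}

theorem W_nil_iff : M.W q [] q' ↔ M.Eps q q' := by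
  refine ⟨fun h => ?_, .nil⟩
  generalize hρ : ([] : List (ELabel Lab)) = ρ at h
  cases h with
  | nil h => exact h
  | snoc => simp at hρ

theorem W_snoc_iff :
    M.W q (σ ++ [x]) q' ↔ ∃ q₁ q₂, M.W q σ q₁ ∧ M.VStep q₁ x q₂ ∧ M.Eps q₂ q' := by
  refine ⟨fun h => ?_, fun ⟨_, _, hσ, hx, hε⟩ => .snoc hσ hx hε⟩
  generalize hρ : σ ++ [x] = ρ at h
  cases h with
  | nil => simp at hρ
  | snoc hσ hx hε =>
    obtain ⟨rfl, hxy⟩ := List.append_inj' hρ rfl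
    cases hxy
    exact ⟨_, _, hσ, hx, hε⟩

theorem W_singleton_iff :
    M.W q [x] q' ↔ ∃ q₁ q₂, M.Eps q q₁ ∧ M.VStep q₁ x q₂ ∧ M.Eps q₂ q' := by
  simpa only [List.nil_append, W_nil_iff] using W_snoc_iff (M := M) (σ := []) (x := x)

theorem W.trans_eps (hσ : M.W q σ q₁) (hε : M.Eps q₁ q') : M.W q σ q' := by
  cases hσ with
  | nil h => exact .nil (Relation.ReflTransGen.trans h hε)
  | snoc h hx h' => exact .snoc h hx (Relation.ReflTransGen.trans h' hε)

theorem after_snoc (M : LTS Q Lab) (σ : List (ELabel Lab)) (x : ELabel Lab) :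
    M.after (σ ++ [x]) = M.afterSet (M.after σ) [x] := by
  ext q
  simp only [afterSet, after, Set.mem_ofPred_eq, W_singleton_iff, W_snoc_iff]
  constructor
  · rintro ⟨q₁, q₂, hσ, hx, hε⟩
    exact ⟨q₁, hσ, q₁, q₂, .refl, hx, hε⟩
  · rintro ⟨q₁, hσ, q₂, q₃, hε, hx, hε'⟩
    exact ⟨q₂, q₃, hσ.trans_eps hε, hx, hε'⟩

theorem mem_outSet_iff : x ∈ M.outSet X ↔ ∃ q ∈ X, x ∈ M.outq q := by
  simp only [outSet, Set.mem_iUnion, exists_prop]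

theorem mem_inSet_iff : ℓ ∈ M.inSet X ↔ ∀ q ∈ X, ℓ ∈ M.inq q := by
  simp only [inSet, Set.mem_iInter]

theorem exists_T_of_mem_inq (hτ : ∀ q', ¬ M.T q none q') (hℓ : ℓ ∈ M.inq q) :
    ∃ q', M.T q (some ℓ) q' := by
  obtain ⟨-, _, hW⟩ := hℓ
  obtain ⟨q₁, q₂, hε, hT, -⟩ := W_singleton_iff.1 hW
  rcases Relation.ReflTransGen.cases_head hε with rfl | ⟨r, hr, -⟩
  · exact ⟨q₂, hT⟩
  · exact absurd hr (hτ r)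

theorem mem_Utraces_of_snoc (h : σ ++ [x] ∈ M.Utraces) : σ ∈ M.Utraces := by
  obtain ⟨hL, ⟨_, hW⟩, hin⟩ := h
  obtain ⟨q₁, -, hσ, -⟩ := W_snoc_iff.1 hW
  exact ⟨fun y hy => hL y (List.mem_append_left _ hy), ⟨q₁, hσ⟩,
    fun σ₁ ℓ σ₂ hsplit => hin σ₁ ℓ (σ₂ ++ [x]) (by simp [hsplit])⟩

theorem mem_inSet_after_of_snoc_mem_Utraces (h : σ ++ [.lab ℓ] ∈ M.Utraces) (hℓ : ℓ ∈ M.I) :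
    ℓ ∈ M.inSet (M.after σ) :=
  mem_inSet_iff.2 fun q hq => ⟨hℓ, h.2.2 σ ℓ [] rfl hℓ q hq⟩

/-- The step `M` contributes to a visible step `x` of a composition with `M`: the step
`q --x--> q'` if `x ∈ L^δ`, and staying idle otherwise. -/
def ProjStep (M : LTS Q Lab) (q : Q) (x : ELabel Lab) (q' : Q) : Prop :=
  (x.inL M.L → M.VStep q x q') ∧ (¬ x.inL M.L → q' = q)

theorem projStep_iff_of_inL (x : ELabel Lab) (hx : x.inL M.L) :
    M.ProjStep q x q' ↔ M.VStep q x q' := by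
  simp only [ProjStep, hx, forall_const, not_true_eq_false, false_imp_iff, and_true]

theorem projStep_iff_of_not_inL (x : ELabel Lab) (hx : ¬ x.inL M.L) :
    M.ProjStep q x q' ↔ q' = q := by
  simp only [ProjStep, hx, false_imp_iff, not_false_eq_true, forall_const, true_and]

end SingleSystem

end LTS

section Projection

variable {Q Lab : Type} {M : LTS Q Lab} {q q' : Q} {x : ELabel Lab} {Ls : Set Lab}

theorem projD_snoc_of_inL (σ : List (ELabel Lab)) (hx : x.inL Ls) :
    projD (σ ++ [x]) Ls = projD σ Ls ++ [x] := by
  simp [projD, hx]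

theorem projD_snoc_of_not_inL (σ : List (ELabel Lab)) (hx : ¬ x.inL Ls) :
    projD (σ ++ [x]) Ls = projD σ Ls := by
  simp [projD, hx]

theorem after_projD_snoc_of_inL (σ : List (ELabel Lab)) (x : ELabel Lab) (hx : x.inL M.L) :
    M.after (projD (σ ++ [x]) M.L) = M.afterSet (M.after (projD σ M.L)) [x] := by
  rw [projD_snoc_of_inL σ hx, LTS.after_snoc]

theorem after_projD_snoc_of_not_inL (σ : List (ELabel Lab)) (x : ELabel Lab)
    (hx : ¬ x.inL M.L) : M.after (projD (σ ++ [x]) M.L) = M.after (projD σ M.L) := by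
  rw [projD_snoc_of_not_inL σ hx]

theorem W_projD_snoc_iff (σ : List (ELabel Lab)) :
    M.W q (projD (σ ++ [x]) M.L) q' ↔
      ∃ q₁ q₂, M.W q (projD σ M.L) q₁ ∧ M.ProjStep q₁ x q₂ ∧ M.Eps q₂ q' := by
  by_cases hx : x.inL M.L
  · simp only [projD_snoc_of_inL σ hx, LTS.W_snoc_iff, LTS.projStep_iff_of_inL x hx]
  · simp only [projD_snoc_of_not_inL σ hx, LTS.projStep_iff_of_not_inL x hx]
    constructor
    · exact fun h => ⟨q', q', h, rfl, .refl⟩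
    · rintro ⟨q₁, _, h, rfl, hε⟩
      exact h.trans_eps hε

end Projection

/-- Local acceptance: every output of `e` enabled in `qe` that is an input of `s` is weakly enabled
in `qs`. `Accepts` and `AcceptsOver` ask for this along whole traces. -/
def AcceptsAt {Qs Qe Lab : Type} (s : LTS Qs Lab) (e : LTS Qe Lab) (qs : Qs) (qe : Qe) : Prop :=
  ∀ ℓ, ELabel.lab ℓ ∈ e.outq qe → ℓ ∈ s.I → ℓ ∈ s.inq qs

section Parallel

variable {Qs Qe Lab : Type} {s : LTS Qs Lab} {e : LTS Qe Lab} {p p' : Qs × Qe}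
  {ℓ : Lab} {x : ELabel Lab}

theorem Composable.notMem_U_right (h : Composable s e) (hℓ : ℓ ∈ s.U) : ℓ ∉ e.U :=
  fun hℓe => Set.notMem_empty ℓ (h ▸ ⟨hℓ, hℓe⟩)

theorem Composable.symm (h : Composable s e) : Composable e s :=
  (Set.inter_comm _ _).trans h

theorem par_L (s : LTS Qs Lab) (e : LTS Qe Lab) : (par s e).L = s.L ∪ e.L := by
  ext ℓ
  simp only [LTS.L, par, Set.mem_union, Set.mem_sdiff]
  tauto

theorem par_eps_of_fst {q q' : Qs} (r : Qe) (h : s.Eps q q') :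
    (par s e).Eps (q, r) (q', r) :=
  h.lift (·, r) fun _ _ hT => .inl ⟨hT, rfl⟩

theorem par_eps_of_snd (q : Qs) {r r' : Qe} (h : e.Eps r r') :
    (par s e).Eps (q, r) (q, r') :=
  h.lift (q, ·) fun _ _ hT => .inr ⟨hT, rfl⟩

theorem par_eps_iff : (par s e).Eps p p' ↔ s.Eps p.1 p'.1 ∧ e.Eps p.2 p'.2 := by
  constructor
  · intro h
    induction h with
    | refl => exact ⟨.refl, .refl⟩
    | tail _ hτ ih =>
      rcases hτ with ⟨hT, heq⟩ | ⟨hT, heq⟩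
      · exact ⟨ih.1.tail hT, heq ▸ ih.2⟩
      · exact ⟨heq ▸ ih.1, ih.2.tail hT⟩
  · exact fun ⟨hs, he⟩ => (par_eps_of_fst p.2 hs).trans (par_eps_of_snd p'.1 he)

theorem par_T_some_iff :
    (par s e).T p (some ℓ) p' ↔
      ℓ ∈ s.L ∪ e.L ∧ s.ProjStep p.1 (.lab ℓ) p'.1 ∧ e.ProjStep p.2 (.lab ℓ) p'.2 := by
  by_cases hs : ℓ ∈ s.L <;> by_cases he : ℓ ∈ e.L <;>
    simp [par, LTS.ProjStep, LTS.VStep, ELabel.inL, hs, he, and_comm]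

theorem par_T_swap_iff {a : Option Lab} :
    (par e s).T p.swap a p'.swap ↔ (par s e).T p a p' := by
  cases a with
  | none => exact or_comm
  | some ℓ => simp only [par_T_some_iff, Prod.fst_swap, Prod.snd_swap, Set.union_comm, and_comm]

theorem par_quiescent_swap (h : (par s e).Quiescent p) : (par e s).Quiescent p.swap :=
  ⟨fun y hy q' hT => h.1 y (Or.symm hy) q'.swap (par_T_swap_iff.1 hT),
    fun q' hT => h.2 q'.swap (par_T_swap_iff.1 hT)⟩

theorem par_quiescent (hs : s.Quiescent p.1) (he : e.Quiescent p.2) : (par s e).Quiescent p := by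
  constructor
  · intro y hy p' hT
    obtain ⟨-, hTs, hTe⟩ := par_T_some_iff.1 hT
    rcases hy with hy | hy
    · exact hs.1 y hy _ (hTs.1 (.inr hy))
    · exact he.1 y hy _ (hTe.1 (.inr hy))
  · rintro p' (⟨hT, -⟩ | ⟨hT, -⟩)
    · exact hs.2 _ hT
    · exact he.2 _ hT

theorem quiescent_snd_of_par (hcomp : Composable s e) (hacc : AcceptsAt s e p.1 p.2)
    (h : (par s e).Quiescent p) : e.Quiescent p.2 := by
  refine ⟨fun y hy r hT => ?_, fun r hT => h.2 (p.1, r) (.inr ⟨hT, rfl⟩)⟩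
  have he : e.ProjStep p.2 (.lab y) r := (LTS.projStep_iff_of_inL (.lab y) (.inr hy)).2 hT
  suffices ∃ q, s.ProjStep p.1 (.lab y) q by
    obtain ⟨q, hs⟩ := this
    exact h.1 y (.inr hy) (q, r) (par_T_some_iff.2 ⟨.inr (.inr hy), hs, he⟩)
  by_cases hys : y ∈ s.L
  · have hyI : y ∈ s.I := hys.resolve_right (hcomp.symm.notMem_U_right hy)
    have hτ : ∀ q, ¬ s.T p.1 none q := fun q hT' => h.2 (q, p.2) (.inl ⟨hT', rfl⟩)
    obtain ⟨q, hq⟩ := LTS.exists_T_of_mem_inq hτ (hacc y ⟨hy, r, hT⟩ hyI)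
    exact ⟨q, (LTS.projStep_iff_of_inL (.lab y) hys).2 hq⟩
  · exact ⟨p.1, (LTS.projStep_iff_of_not_inL (.lab y) hys).2 rfl⟩

theorem par_quiescent_iff (hcomp : Composable s e) (hacc : AcceptsAt s e p.1 p.2)
    (hacc' : AcceptsAt e s p.2 p.1) :
    (par s e).Quiescent p ↔ s.Quiescent p.1 ∧ e.Quiescent p.2 :=
  ⟨fun h => ⟨quiescent_snd_of_par hcomp.symm hacc' (par_quiescent_swap h),
    quiescent_snd_of_par hcomp hacc h⟩, fun h => par_quiescent h.1 h.2⟩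

theorem par_vstep_iff (hcomp : Composable s e) (hacc : AcceptsAt s e p.1 p.2)
    (hacc' : AcceptsAt e s p.2 p.1) (hx : x.inL (s.L ∪ e.L)) :
    (par s e).VStep p x p' ↔ s.ProjStep p.1 x p'.1 ∧ e.ProjStep p.2 x p'.2 := by
  cases x with
  | lab ℓ => exact par_T_some_iff.trans (and_iff_right hx)
  | delta =>
    rw [LTS.projStep_iff_of_inL .delta trivial, LTS.projStep_iff_of_inL .delta trivial]
    simp only [LTS.VStep, Prod.ext_iff, par_quiescent_iff hcomp hacc hacc']
    exact and_and_and_comm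

theorem after_par_snoc (hcomp : Composable s e) {σ : List (ELabel Lab)}
    (hx : x.inL (s.L ∪ e.L))
    (hσ : (par s e).after σ = s.after (projD σ s.L) ×ˢ e.after (projD σ e.L))
    (hacc : ∀ p ∈ (par s e).after σ, AcceptsAt s e p.1 p.2 ∧ AcceptsAt e s p.2 p.1) :
    (par s e).after (σ ++ [x]) =
      s.after (projD (σ ++ [x]) s.L) ×ˢ e.after (projD (σ ++ [x]) e.L) := by
  have hW : ∀ p, (par s e).W (par s e).q0 σ p ↔
      s.W s.q0 (projD σ s.L) p.1 ∧ e.W e.q0 (projD σ e.L) p.2 := Set.ext_iff.1 hσ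
  ext p
  simp only [LTS.after, Set.mem_ofPred_eq, Set.mem_prod, LTS.W_snoc_iff, W_projD_snoc_iff]
  constructor
  · rintro ⟨p₁, p₂, h, hstep, hε⟩
    obtain ⟨hs, he⟩ := (par_vstep_iff hcomp (hacc p₁ h).1 (hacc p₁ h).2 hx).1 hstep
    obtain ⟨hεs, hεe⟩ := par_eps_iff.1 hε
    exact ⟨⟨_, _, ((hW p₁).1 h).1, hs, hεs⟩, ⟨_, _, ((hW p₁).1 h).2, he, hεe⟩⟩
  · rintro ⟨⟨q₁, q₂, hs, hstep_s, hεs⟩, ⟨r₁, r₂, he, hstep_e, hεe⟩⟩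
    have h : (q₁, r₁) ∈ (par s e).after σ := (hW (q₁, r₁)).2 ⟨hs, he⟩
    have hstep : (par s e).VStep (q₁, r₁) x (q₂, r₂) :=
      (par_vstep_iff hcomp (hacc _ h).1 (hacc _ h).2 hx).2 ⟨hstep_s, hstep_e⟩
    exact ⟨(q₁, r₁), (q₂, r₂), h, hstep, par_eps_iff.2 ⟨hεs, hεe⟩⟩

end Parallel

section Inputs

variable {Qs Qe Lab : Type} {s : LTS Qs Lab} {e : LTS Qe Lab} {Xs : Set Qs} {Xe : Set Qe}
  {p : Qs × Qe} {ℓ : Lab}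

theorem mem_inq_fst_of_mem_inq_par (h : ℓ ∈ (par s e).inq p) (hℓ : ℓ ∈ s.I) : ℓ ∈ s.inq p.1 := by
  obtain ⟨-, p', hW⟩ := h
  obtain ⟨p₁, p₂, hε, hT, hε'⟩ := LTS.W_singleton_iff.1 hW
  have hTs := (par_T_some_iff.1 hT).2.1.1 (.inl hℓ)
  exact ⟨hℓ, p'.1, LTS.W_singleton_iff.2 ⟨_, _, (par_eps_iff.1 hε).1, hTs, (par_eps_iff.1 hε').1⟩⟩

theorem mem_inq_snd_of_mem_inq_par (h : ℓ ∈ (par s e).inq p) (hℓ : ℓ ∈ e.I) : ℓ ∈ e.inq p.2 := by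
  obtain ⟨-, p', hW⟩ := h
  obtain ⟨p₁, p₂, hε, hT, hε'⟩ := LTS.W_singleton_iff.1 hW
  have hTe := (par_T_some_iff.1 hT).2.2.1 (.inl hℓ)
  exact ⟨hℓ, p'.2, LTS.W_singleton_iff.2 ⟨_, _, (par_eps_iff.1 hε).2, hTe, (par_eps_iff.1 hε').2⟩⟩

theorem mem_inSet_fst_of_mem_inSet_par (hXe : Xe.Nonempty)
    (h : ℓ ∈ (par s e).inSet (Xs ×ˢ Xe)) (hℓ : ℓ ∈ s.I) : ℓ ∈ s.inSet Xs :=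
  let ⟨r, hr⟩ := hXe
  LTS.mem_inSet_iff.2 fun q hq =>
    mem_inq_fst_of_mem_inq_par (LTS.mem_inSet_iff.1 h (q, r) ⟨hq, hr⟩) hℓ

theorem mem_inSet_snd_of_mem_inSet_par (hXs : Xs.Nonempty)
    (h : ℓ ∈ (par s e).inSet (Xs ×ˢ Xe)) (hℓ : ℓ ∈ e.I) : ℓ ∈ e.inSet Xe :=
  let ⟨q, hq⟩ := hXs
  LTS.mem_inSet_iff.2 fun r hr =>
    mem_inq_snd_of_mem_inq_par (LTS.mem_inSet_iff.1 h (q, r) ⟨hq, hr⟩) hℓ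

end Inputs

namespace IsEcosim

variable {Qs Qe Lab : Type} {s : LTS Qs Lab} {e : LTS Qe Lab} {R : Set (Set Qs × Set Qe)}
  {Xs : Set Qs} {Xe : Set Qe} {p p' : Qs × Qe} {qs : Qs} {qe : Qe} {ℓ : Lab} {x : ELabel Lab}
  {σ : List (ELabel Lab)}

theorem acceptsAt (hR : IsEcosim s e R) (hX : (Xs, Xe) ∈ R) (hp : p ∈ Xs ×ˢ Xe) :
    AcceptsAt s e p.1 p.2 ∧ AcceptsAt e s p.2 p.1 := by
  obtain ⟨houtE, houtS, -⟩ := hR.2 Xs Xe hX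
  constructor
  · intro ℓ hout hin
    exact LTS.mem_inSet_iff.1 (houtE ℓ (LTS.mem_outSet_iff.2 ⟨p.2, hp.2, hout⟩) hin).1 p.1 hp.1
  · intro ℓ hout hin
    exact LTS.mem_inSet_iff.1 (houtS ℓ (LTS.mem_outSet_iff.2 ⟨p.1, hp.1, hout⟩) hin).1 p.2 hp.2

theorem afterSet_mem_of_sync (hR : IsEcosim s e R) (hcomp : Composable s e) (hX : (Xs, Xe) ∈ R)
    (hp : p ∈ Xs ×ˢ Xe) (hs : s.T p.1 (some ℓ) qs) (he : e.T p.2 (some ℓ) qe)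
    (hℓs : ℓ ∈ s.L) (hℓe : ℓ ∈ e.L)
    (hin : ℓ ∈ (par s e).I → ℓ ∈ (par s e).inSet (Xs ×ˢ Xe)) :
    (s.afterSet Xs [.lab ℓ], e.afterSet Xe [.lab ℓ]) ∈ R := by
  obtain ⟨houtE, houtS, -, -, hinin, -⟩ := hR.2 Xs Xe hX
  by_cases hUe : ℓ ∈ e.U
  · have hout : .lab ℓ ∈ e.outSet Xe := LTS.mem_outSet_iff.2 ⟨p.2, hp.2, hUe, qe, he⟩
    exact (houtE ℓ hout (hℓs.resolve_right (hcomp.symm.notMem_U_right hUe))).2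
  have hIe : ℓ ∈ e.I := hℓe.resolve_right hUe
  by_cases hUs : ℓ ∈ s.U
  · have hout : .lab ℓ ∈ s.outSet Xs := LTS.mem_outSet_iff.2 ⟨p.1, hp.1, hUs, qs, hs⟩
    exact (houtS ℓ hout hIe).2
  have hIs : ℓ ∈ s.I := hℓs.resolve_right hUs
  have hpar : ℓ ∈ (par s e).inSet (Xs ×ˢ Xe) := hin (.inl ⟨hIs, hUe⟩)
  exact hinin ℓ (mem_inSet_fst_of_mem_inSet_par ⟨p.2, hp.2⟩ hpar hIs)
    (mem_inSet_snd_of_mem_inSet_par ⟨p.1, hp.1⟩ hpar hIe)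

theorem afterSet_fst_mem (hR : IsEcosim s e R) (hX : (Xs, Xe) ∈ R) (hp : p ∈ Xs ×ˢ Xe)
    (hs : s.T p.1 (some ℓ) qs) (hℓs : ℓ ∈ s.L) (hℓe : ℓ ∉ e.L)
    (hin : ℓ ∈ (par s e).I → ℓ ∈ (par s e).inSet (Xs ×ˢ Xe)) :
    (s.afterSet Xs [.lab ℓ], Xe) ∈ R := by
  refine (hR.2 Xs Xe hX).2.2.2.1 ℓ ?_ hℓe
  rcases hℓs with hI | hU
  · have hpar : ℓ ∈ (par s e).inSet (Xs ×ˢ Xe) := hin (.inl ⟨hI, fun h => hℓe (.inr h)⟩)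
    exact .inr (mem_inSet_fst_of_mem_inSet_par ⟨p.2, hp.2⟩ hpar hI)
  · exact .inl (LTS.mem_outSet_iff.2 ⟨p.1, hp.1, hU, qs, hs⟩)

theorem afterSet_snd_mem (hR : IsEcosim s e R) (hX : (Xs, Xe) ∈ R) (hp : p ∈ Xs ×ˢ Xe)
    (he : e.T p.2 (some ℓ) qe) (hℓe : ℓ ∈ e.L) (hℓs : ℓ ∉ s.L)
    (hin : ℓ ∈ (par s e).I → ℓ ∈ (par s e).inSet (Xs ×ˢ Xe)) :
    (Xs, e.afterSet Xe [.lab ℓ]) ∈ R := by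
  refine (hR.2 Xs Xe hX).2.2.1 ℓ ?_ hℓs
  rcases hℓe with hI | hU
  · have hpar : ℓ ∈ (par s e).inSet (Xs ×ˢ Xe) := hin (.inr ⟨hI, fun h => hℓs (.inr h)⟩)
    exact .inr (mem_inSet_snd_of_mem_inSet_par ⟨p.1, hp.1⟩ hpar hI)
  · exact .inl (LTS.mem_outSet_iff.2 ⟨p.2, hp.2, hU, qe, he⟩)

theorem after_projD_snoc_mem (hR : IsEcosim s e R) (hcomp : Composable s e)
    (hX : (s.after (projD σ s.L), e.after (projD σ e.L)) ∈ R)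
    (hp : p ∈ s.after (projD σ s.L) ×ˢ e.after (projD σ e.L)) (hstep : (par s e).VStep p x p')
    (hin : ∀ ℓ, x = .lab ℓ → ℓ ∈ (par s e).I →
      ℓ ∈ (par s e).inSet (s.after (projD σ s.L) ×ˢ e.after (projD σ e.L))) :
    (s.after (projD (σ ++ [x]) s.L), e.after (projD (σ ++ [x]) e.L)) ∈ R := by
  cases x with
  | delta =>
    obtain ⟨hacc, hacc'⟩ := hR.acceptsAt hX hp
    obtain ⟨hs, he⟩ := (par_quiescent_iff hcomp hacc hacc').1 hstep.2
    have hquiet := (hR.2 _ _ hX).2.2.2.2.2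
    rw [after_projD_snoc_of_inL σ .delta trivial, after_projD_snoc_of_inL σ .delta trivial]
    exact hquiet (LTS.mem_outSet_iff.2 ⟨p.1, hp.1, hs⟩) (LTS.mem_outSet_iff.2 ⟨p.2, hp.2, he⟩)
  | lab ℓ =>
    rcases hstep with ⟨hℓs, hℓe, hs, -⟩ | ⟨hℓe, hℓs, he, -⟩ | ⟨hℓs, hℓe, hs, he⟩
    · rw [after_projD_snoc_of_inL σ (.lab ℓ) hℓs, after_projD_snoc_of_not_inL σ (.lab ℓ) hℓe]
      exact hR.afterSet_fst_mem hX hp hs hℓs hℓe (hin ℓ rfl)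
    · rw [after_projD_snoc_of_not_inL σ (.lab ℓ) hℓs, after_projD_snoc_of_inL σ (.lab ℓ) hℓe]
      exact hR.afterSet_snd_mem hX hp he hℓe hℓs (hin ℓ rfl)
    · rw [after_projD_snoc_of_inL σ (.lab ℓ) hℓs, after_projD_snoc_of_inL σ (.lab ℓ) hℓe]
      exact hR.afterSet_mem_of_sync hcomp hX hp hs he hℓs hℓe (hin ℓ rfl)

theorem after_projD_mem_and_after_par_eq_prod (hR : IsEcosim s e R) (hcomp : Composable s e)
    (hσ : σ ∈ (par s e).Utraces) :
    (s.after (projD σ s.L), e.after (projD σ e.L)) ∈ R ∧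
      (par s e).after σ = s.after (projD σ s.L) ×ˢ e.after (projD σ e.L) := by
  induction σ using List.reverseRecOn with
  | nil =>
    refine ⟨hR.1, Set.ext fun p => ?_⟩
    simp only [projD, List.filter_nil, LTS.after, Set.mem_ofPred_eq, Set.mem_prod, LTS.W_nil_iff]
    exact par_eps_iff
  | append_singleton σ x ih =>
    obtain ⟨hX, hprod⟩ := ih (LTS.mem_Utraces_of_snoc hσ)
    have hx : x.inL (s.L ∪ e.L) := par_L s e ▸ hσ.1 x (by simp)
    have hacc : ∀ p ∈ (par s e).after σ, AcceptsAt s e p.1 p.2 ∧ AcceptsAt e s p.2 p.1 :=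
      fun p hp => hR.acceptsAt hX (hprod ▸ hp)
    obtain ⟨_, hW⟩ := hσ.2.1
    obtain ⟨p, p', hp, hstep, -⟩ := LTS.W_snoc_iff.1 hW
    refine ⟨hR.after_projD_snoc_mem hcomp hX (hprod.subset hp) hstep ?_,
      after_par_snoc hcomp hx hprod hacc⟩
    rintro ℓ rfl hℓ
    exact hprod ▸ LTS.mem_inSet_after_of_snoc_mem_Utraces hσ hℓ

end IsEcosim

theorem project_from_parcomp_eco_general {Qs Qe Lab : Type}
    (s : LTS Qs Lab) (e : LTS Qe Lab) (hcomp : Composable s e) (heco : Eco s e)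
    (σ : List (ELabel Lab)) (hσ : σ ∈ (par s e).Utraces) (qs : Qs) (qe : Qe) :
    (par s e).W (par s e).q0 σ (qs, qe) ↔
      s.W s.q0 (projD σ s.L) qs ∧ e.W e.q0 (projD σ e.L) qe := by
  obtain ⟨R, hR⟩ := heco
  have hprod := (hR.after_projD_mem_and_after_par_eq_prod hcomp hσ).2
  exact Set.ext_iff.1 hprod (qs, qe)

/-- for composable `s`, `e` with `s eco e` and a utrace `σ` of
`s ∥ e`:  `s ∥ e ==σ==> q_s ∥ q_e` iff `s ==σ↾L_s^δ==> q_s` and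
`e ==σ↾L_e^δ==> q_e`. -/
theorem project_from_parcomp_eco {Qs Qe Lab : Type}
    (s : LTS Qs Lab) (e : LTS Qe Lab)
    (hs : s.WellFormed) (he : e.WellFormed)
    (hcomp : Composable s e) (heco : Eco s e)
    (σ : List (ELabel Lab)) (hσ : σ ∈ (par s e).Utraces)
    (qs : Qs) (qe : Qe) :
    (par s e).W (par s e).q0 σ (qs, qe) ↔
      s.W s.q0 (projD σ s.L) qs ∧ e.W e.q0 (projD σ e.L) qe := by
  exact project_from_parcomp_eco_general s e hcomp heco σ hσ qs qe
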